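/- Every ultrafilter additively isomorphic to a stable ordered union ultrafilter is itself a stable ordered union ultrafilter. -/

import Mathlib

open Finset

/-- `FU t` : the set of finite unions of an infinite sequence `t` in `F`. -/
def FU (t : ℕ → Finset ℕ) : Set (Finset ℕ) :=
  {x | ∃ v : Finset ℕ, v.Nonempty ∧ x = v.biUnion t}

/-- a sequence of nonempty pairwise disjoint finite sets. -/
def IsDisjointSeq (t : ℕ → Finset ℕ) : Prop :=
  (∀ i, (t i).Nonempty) ∧ Pairwise (Function.onFun Disjoint t)

/-- `ordLT s t` : `max s < min t`, i.e. every element of `s` is below every element of `t`. -/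
def ordLT (s t : Finset ℕ) : Prop := ∀ a ∈ s, ∀ b ∈ t, a < b

/-- `t` is an almost condensation of `s`: the FU-set of some tail of `t` is inside `FU s`. -/
def AlmostCond (t s : ℕ → Finset ℕ) : Prop :=
  ∃ m, FU (fun n => t (n + m)) ⊆ FU s

/-- a union ultrafilter: an ultrafilter on `F` with a base of FU-sets of disjoint sequences. -/
def IsUnionUltrafilter (u : Ultrafilter (Finset ℕ)) : Prop :=
  ∀ A ∈ u, ∃ t, IsDisjointSeq t ∧ FU t ∈ u ∧ FU t ⊆ A

/-- stability: countably many FU-sets in `u` admit a common almost condensation in `u`. -/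
def IsStable (u : Ultrafilter (Finset ℕ)) : Prop :=
  ∀ s : ℕ → ℕ → Finset ℕ, (∀ α, IsDisjointSeq (s α)) → (∀ α, FU (s α) ∈ u) →
    ∃ t, IsDisjointSeq t ∧ FU t ∈ u ∧ ∀ α, AlmostCond t (s α)

/-- the Ramsey property for pairs: every finite partition of the ordered pairs `F²_<`
has a homogeneous set of the form `A²_<` with `A ∈ u`. -/
def RamseyPairs (u : Ultrafilter (Finset ℕ)) : Prop :=
  ∀ n : ℕ, ∀ c : Finset ℕ × Finset ℕ → Fin (n + 1),
    ∃ A ∈ u, ∃ i, ∀ v ∈ A, ∀ w ∈ A, ordLT v w → c (v, w) = i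

/-- an ordered sequence: `max (t i) < min (t j)` for `i < j`. -/
def IsOrderedSeq (t : ℕ → Finset ℕ) : Prop := ∀ i j : ℕ, i < j → ordLT (t i) (t j)

/-- `u` and `u'` are additively isomorphic: there are `FU s ∈ u`, `FU x ∈ u'` such that the
natural map `∪_{i∈v} s i ↦ ∪_{i∈v} x i` sends `u` to `u'`. -/
def AddIso (u u' : Ultrafilter (Finset ℕ)) : Prop :=
  ∃ s x : ℕ → Finset ℕ, IsDisjointSeq s ∧ IsDisjointSeq x ∧ FU s ∈ u ∧ FU x ∈ u' ∧
    ∃ φ : Finset ℕ → Finset ℕ,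
      (∀ v : Finset ℕ, v.Nonempty → φ (v.biUnion s) = v.biUnion x) ∧
      Ultrafilter.map φ u = u'

/-- an ordered union ultrafilter: a base of FU-sets of ordered disjoint sequences. -/
def IsOrderedUnionUltrafilter (u : Ultrafilter (Finset ℕ)) : Prop :=
  ∀ A ∈ u, ∃ t, IsDisjointSeq t ∧ IsOrderedSeq t ∧ FU t ∈ u ∧ FU t ⊆ A

open Filter

/-! Colour a finite set `a` by the parity of the number of its short gaps, meaning consecutive
elements `p < q` with `q < g p`. For blocks `a < b`, the number of short gaps of `a ∪ b` is the sum
of those of `a` and of `b`, plus one exactly when the step from `max a` to `b` is short. On a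
homogeneous `FU t` all of these have the same parity `k`. A far enough block always leaves a
long gap, so `k = k + k`, and a short step between blocks would also give `k = k + k + 1`. So an
ordered union ultrafilter has a base of sets `FU t` whose blocks are separated by gaps growing as
fast as prescribed by `g`. For `g` adapted to the two disjoint sequences of an additive
isomorphism, the natural map sends such a `t` to an ordered sequence, and this carries both
properties over to the image. -/

lemma mem_FU_apply (t : ℕ → Finset ℕ) (i : ℕ) : t i ∈ FU t :=
  ⟨{i}, singleton_nonempty i, singleton_biUnion.symm⟩

lemma union_mem_FU (t : ℕ → Finset ℕ) (i j : ℕ) : t i ∪ t j ∈ FU t :=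
  ⟨{i, j}, insert_nonempty _ _, by rw [biUnion_insert, singleton_biUnion]⟩

lemma mem_FU_tail_iff {t : ℕ → Finset ℕ} {m : ℕ} {a : Finset ℕ} :
    a ∈ FU (fun n => t (n + m)) ↔
      ∃ v : Finset ℕ, v.Nonempty ∧ (∀ i ∈ v, m ≤ i) ∧ a = v.biUnion t := by
  constructor
  · rintro ⟨v, hv, rfl⟩
    refine ⟨v.image (· + m), hv.image _, ?_, image_biUnion.symm⟩
    exact forall_mem_image.2 fun i _ => Nat.le_add_left m i
  · rintro ⟨v, hv, hvm, rfl⟩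
    refine ⟨v.image (· - m), hv.image _, ?_⟩
    rw [image_biUnion]
    exact biUnion_congr rfl fun i hi => by rw [Nat.sub_add_cancel (hvm i hi)]

lemma IsOrderedSeq.isDisjointSeq {t : ℕ → Finset ℕ} (ho : IsOrderedSeq t)
    (hne : ∀ i, (t i).Nonempty) : IsDisjointSeq t := by
  refine ⟨hne, (pairwise_disjoint_on t).2 fun i j hij => disjoint_left.2 fun a hai haj => ?_⟩
  exact lt_irrefl a (ho i j hij a hai a haj)

namespace IsDisjointSeq

variable {s t x : ℕ → Finset ℕ}

lemma eventually_notMem (ht : IsDisjointSeq t) (n : ℕ) : ∀ᶠ i in cofinite, n ∉ t i := by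
  have hsub : {i | n ∈ t i}.Subsingleton := fun i hi j hj =>
    ht.2.eq (not_disjoint_iff.2 ⟨n, hi, hj⟩)
  simpa only [eventually_cofinite, not_not] using hsub.finite

lemma eventually_disjoint (ht : IsDisjointSeq t) (a : Finset ℕ) :
    ∀ᶠ i in cofinite, Disjoint a (t i) := by
  simpa only [disjoint_left] using
    (eventually_all_finset a).2 fun n _ => ht.eventually_notMem n

lemma eventually_ordLT (ht : IsDisjointSeq t) (a : Finset ℕ) :
    ∀ᶠ i in cofinite, ordLT a (t i) := by
  filter_upwards [ht.eventually_disjoint (a.biUnion Iic)] with i hi p hp q hq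
  by_contra! hqp
  exact disjoint_left.1 hi (mem_biUnion.2 ⟨p, hp, mem_Iic.2 hqp⟩) hq

lemma eventually_ordLT_of_mem (hs : IsDisjointSeq s) (hx : IsDisjointSeq x) (p : ℕ) :
    ∀ᶠ q in atTop, ∀ i j, p ∈ s i → q ∈ s j → ordLT (x i) (x j) := by
  have hfixed : ∀ i, ∀ᶠ q in cofinite, ∀ j, q ∈ s j → ordLT (x i) (x j) := fun i => by
    have hfin : {j | ¬ ordLT (x i) (x j)}.Finite := hx.eventually_ordLT (x i)
    refine (hfin.biUnion fun j _ => (s j).finite_toSet).subset fun q hq => ?_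
    simpa [and_comm] using hq
  have hp : {i | p ∈ s i}.Finite := by simpa using hs.eventually_notMem p
  rw [← Nat.cofinite_eq_atTop]
  filter_upwards [(eventually_all_finite hp).2 fun i _ => hfixed i] with q hq i j hi
  exact hq i hi j

end IsDisjointSeq

lemma AlmostCond.trans {t r s : ℕ → Finset ℕ} (ht : IsDisjointSeq t)
    (hr : ∀ i, (r i).Nonempty) (htr : AlmostCond t r) (hrs : AlmostCond r s) :
    AlmostCond t s := by
  obtain ⟨m₁, hm₁⟩ := htr
  obtain ⟨m₂, hm₂⟩ := hrs
  have hdisj := ht.eventually_disjoint ((range m₂).biUnion r)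
  rw [Nat.cofinite_eq_atTop] at hdisj
  obtain ⟨m₀, hm₀⟩ := eventually_atTop.1 hdisj
  refine ⟨max m₀ m₁, fun a ha => hm₂ ?_⟩
  obtain ⟨v, hv, hvm, rfl⟩ := mem_FU_tail_iff.1 ha
  obtain ⟨w, hw, hvw⟩ :=
    hm₁ (mem_FU_tail_iff.2 ⟨v, hv, fun i hi => le_of_max_le_right (hvm i hi), rfl⟩)
  refine mem_FU_tail_iff.2 ⟨w, hw, fun k hk => ?_, hvw⟩
  by_contra! hkm
  obtain ⟨c, hc⟩ := hr k
  have hcv : c ∈ v.biUnion t := hvw ▸ mem_biUnion.2 ⟨k, hk, hc⟩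
  obtain ⟨i, hi, hci⟩ := mem_biUnion.1 hcv
  have hcr : c ∈ (range m₂).biUnion r := mem_biUnion.2 ⟨k, mem_range.2 hkm, hc⟩
  exact disjoint_left.1 (hm₀ i (le_of_max_le_left (hvm i hi))) hcr hci

/-- The elements `p` of `a` whose successor in `a` lies below `g p`; the short gaps of `a` with
respect to `g` are encoded by their left endpoints. -/
def shortGaps (g : ℕ → ℕ) (a : Finset ℕ) : Finset ℕ :=
  {p ∈ a | ∃ q ∈ a, p < q ∧ q < g p}

lemma shortGaps_union (g : ℕ → ℕ) {a b : Finset ℕ} (hab : ordLT a b) {p : ℕ}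
    (hp : IsGreatest (a : Set ℕ) p) :
    shortGaps g (a ∪ b) =
      shortGaps g a ∪ shortGaps g b ∪ if ∃ q ∈ b, q < g p then {p} else ∅ := by
  have hpa : p ∈ a := hp.1
  have hle : ∀ c ∈ a, c ≤ p := fun c hc => hp.2 hc
  ext c
  have hite : (c ∈ if ∃ q ∈ b, q < g p then ({p} : Finset ℕ) else ∅) ↔
      c = p ∧ ∃ q ∈ b, q < g p := by
    split_ifs with h <;> simp [h]
  simp only [mem_union, hite, shortGaps, mem_filter]
  constructor
  · rintro ⟨hca | hcb, q, hqa | hqb, hcq, hqg⟩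
    · exact .inl (.inl ⟨hca, q, hqa, hcq, hqg⟩)
    · rcases (hle c hca).lt_or_eq with hcp | rfl
      · exact .inl (.inl ⟨hca, p, hpa, hcp, (hab p hpa q hqb).trans hqg⟩)
      · exact .inr ⟨rfl, q, hqb, hqg⟩
    · exact absurd (hab q hqa c hcb) hcq.asymm
    · exact .inl (.inr ⟨hcb, q, hqb, hcq, hqg⟩)
  · rintro ((⟨hca, q, hqa, hq⟩ | ⟨hcb, q, hqb, hq⟩) | ⟨rfl, q, hqb, hqg⟩)
    · exact ⟨.inl hca, q, .inl hqa, hq⟩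
    · exact ⟨.inr hcb, q, .inr hqb, hq⟩
    · exact ⟨.inl hpa, q, .inr hqb, hab c hpa q hqb, hqg⟩

lemma card_shortGaps_union (g : ℕ → ℕ) {a b : Finset ℕ} (hab : ordLT a b) {p : ℕ}
    (hp : IsGreatest (a : Set ℕ) p) :
    #(shortGaps g (a ∪ b)) =
      #(shortGaps g a) + #(shortGaps g b) + if ∃ q ∈ b, q < g p then 1 else 0 := by
  have hdisj : Disjoint a b := disjoint_left.2 fun c hca hcb => lt_irrefl c (hab c hca c hcb)
  have hpa : p ∉ shortGaps g a := fun h => by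
    obtain ⟨-, q, hq, hpq, -⟩ := mem_filter.1 h
    exact hpq.not_ge (hp.2 hq)
  have hpb : p ∉ shortGaps g b := fun h =>
    disjoint_left.1 hdisj hp.1 (mem_filter.1 h).1
  have hgaps : #(shortGaps g a ∪ shortGaps g b) = #(shortGaps g a) + #(shortGaps g b) :=
    card_union_of_disjoint (hdisj.mono (filter_subset _ _) (filter_subset _ _))
  rw [shortGaps_union g hab hp, ← hgaps]
  split_ifs
  · exact card_union_of_disjoint (disjoint_singleton_right.2 (by simp [hpa, hpb]))
  · rw [union_empty, add_zero]

lemma le_of_forall_card_shortGaps_eq {R : Type*} [Ring R] [Nontrivial R] {g : ℕ → ℕ}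
    {t : ℕ → Finset ℕ} {k : R} (hd : IsDisjointSeq t) (ho : IsOrderedSeq t)
    (hk : ∀ a ∈ FU t, (#(shortGaps g a) : R) = k) {i j : ℕ} (hij : i < j) {p q : ℕ}
    (hp : IsGreatest (t i : Set ℕ) p) (hq : q ∈ t j) : g p ≤ q := by
  by_contra! hqp
  have hcard : ∀ l, i < l → k = k + k + if ∃ r ∈ t l, r < g p then 1 else 0 := fun l hl => by
    have h := congrArg (Nat.cast (R := R)) (card_shortGaps_union g (ho i l hl) hp)
    push_cast at h
    rwa [hk _ (union_mem_FU t i l), hk _ (mem_FU_apply t i), hk _ (mem_FU_apply t l)] at h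
  have hshort : k = k + k + 1 := by
    have hyes : ∃ r ∈ t j, r < g p := ⟨q, hq, hqp⟩
    simpa only [if_pos hyes] using hcard j hij
  obtain ⟨l, hfar, hil⟩ : ∃ l, ordLT {g p} (t l) ∧ i < l := by
    have hev := hd.eventually_ordLT {g p}
    rw [Nat.cofinite_eq_atTop] at hev
    exact (hev.and (eventually_gt_atTop i)).exists
  have hlong : k = k + k + 0 := by
    have hno : ¬ ∃ r ∈ t l, r < g p := fun ⟨r, hr, hrp⟩ =>
      (hfar (g p) (mem_singleton_self _) r hr).asymm hrp
    simpa only [if_neg hno] using hcard l hil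
  exact one_ne_zero (add_left_cancel (hshort.symm.trans hlong))

namespace IsOrderedUnionUltrafilter

variable {u : Ultrafilter (Finset ℕ)}

lemma exists_forall_mem_FU_eq {β : Type*} [Finite β] (hu : IsOrderedUnionUltrafilter u)
    (f : Finset ℕ → β) {A : Set (Finset ℕ)} (hA : A ∈ u) :
    ∃ t, IsDisjointSeq t ∧ IsOrderedSeq t ∧ FU t ∈ u ∧ FU t ⊆ A ∧ ∃ k, ∀ a ∈ FU t, f a = k := by
  obtain ⟨k, hk⟩ := (u.map f).eq_pure_of_finite
  have hfk : f ⁻¹' {k} ∈ u := by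
    rw [← Ultrafilter.mem_map, hk]
    exact Ultrafilter.mem_pure.2 rfl
  obtain ⟨t, hd, ho, htu, hsub⟩ := hu _ (inter_mem hA hfk)
  exact ⟨t, hd, ho, htu, fun a ha => (hsub ha).1, k, fun a ha => (hsub ha).2⟩

lemma exists_gaps (hu : IsOrderedUnionUltrafilter u) (g : ℕ → ℕ) {A : Set (Finset ℕ)}
    (hA : A ∈ u) :
    ∃ t, IsDisjointSeq t ∧ FU t ∈ u ∧ FU t ⊆ A ∧
      ∀ i j, i < j → ∀ p ∈ t i, ∀ q ∈ t j, g p ≤ q := by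
  obtain ⟨t, hd, ho, htu, hsub, k, hk⟩ :=
    hu.exists_forall_mem_FU_eq (fun a => (#(shortGaps (partialSups g) a) : ZMod 2)) hA
  refine ⟨t, hd, htu, hsub, fun i j hij p hp q hq => ?_⟩
  have hmax := (t i).isGreatest_max' (hd.1 i)
  calc g p ≤ partialSups g ((t i).max' (hd.1 i)) := le_partialSups_of_le g (hmax.2 hp)
    _ ≤ q := le_of_forall_card_shortGaps_eq hd ho hk hij hmax hq

end IsOrderedUnionUltrafilter

/-- `φ` restricts to the natural map `⋃_{i ∈ v} s i ↦ ⋃_{i ∈ v} x i` from `FU s` to `FU x`; its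
values outside `FU s` are arbitrary. -/
def IsNaturalMap (φ : Finset ℕ → Finset ℕ) (s x : ℕ → Finset ℕ) : Prop :=
  ∀ v : Finset ℕ, v.Nonempty → φ (v.biUnion s) = v.biUnion x

namespace IsNaturalMap

variable {φ : Finset ℕ → Finset ℕ} {s x : ℕ → Finset ℕ}

lemma image_FU (hφ : IsNaturalMap φ s x) : φ '' FU s = FU x := by
  ext a
  constructor
  · rintro ⟨_, ⟨v, hv, rfl⟩, rfl⟩
    exact ⟨v, hv, hφ v hv⟩
  · rintro ⟨v, hv, rfl⟩
    exact ⟨_, ⟨v, hv, rfl⟩, hφ v hv⟩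

lemma biUnion (hφ : IsNaturalMap φ s x) {v : ℕ → Finset ℕ} (hv : ∀ i, (v i).Nonempty) :
    IsNaturalMap φ (fun i => (v i).biUnion s) (fun i => (v i).biUnion x) := fun w hw => by
  rw [← biUnion_biUnion, ← biUnion_biUnion, hφ _ (hw.biUnion fun i _ => hv i)]

lemma comp (hφ : IsNaturalMap φ s x) (f : ℕ → ℕ) : IsNaturalMap φ (s ∘ f) (x ∘ f) := by
  simpa only [singleton_biUnion, Function.comp_def] using
    hφ.biUnion fun i => singleton_nonempty (f i)

lemma almostCond (hφ : IsNaturalMap φ s x) {r z : ℕ → Finset ℕ} (hsr : AlmostCond s r)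
    (hrz : FU r ⊆ φ ⁻¹' FU z) : AlmostCond x z := by
  obtain ⟨m, hm⟩ := hsr
  refine ⟨m, ?_⟩
  calc FU (x ∘ (· + m)) = φ '' FU (s ∘ (· + m)) := (hφ.comp _).image_FU.symm
    _ ⊆ FU z := Set.image_subset_iff.2 (hm.trans hrz)

end IsNaturalMap

namespace AddIso

variable {u u' : Ultrafilter (Finset ℕ)}

lemma exists_map_isOrderedSeq (h : AddIso u u') (hu : IsOrderedUnionUltrafilter u) :
    ∃ φ, u.map φ = u' ∧ ∀ A ∈ u, ∃ t y, IsDisjointSeq t ∧ FU t ∈ u ∧ FU t ⊆ A ∧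
      IsDisjointSeq y ∧ IsOrderedSeq y ∧ IsNaturalMap φ t y := by
  obtain ⟨s, x, hs, hx, hsu, -, φ, hφ, hmap⟩ := h
  refine ⟨φ, hmap, fun A hA => ?_⟩
  choose g hg using fun p => eventually_atTop.1 (hs.eventually_ordLT_of_mem hx p)
  obtain ⟨t, htd, htu, htA, hgap⟩ := hu.exists_gaps g (inter_mem hA hsu)
  choose v hv htv using fun i => (htA (mem_FU_apply t i)).2
  obtain rfl : t = fun i => (v i).biUnion s := funext htv
  have hyo : IsOrderedSeq fun i => (v i).biUnion x := fun i j hij a ha b hb => by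
    obtain ⟨k, hk, hak⟩ := mem_biUnion.1 ha
    obtain ⟨l, hl, hbl⟩ := mem_biUnion.1 hb
    obtain ⟨p, hp⟩ := hs.1 k
    obtain ⟨q, hq⟩ := hs.1 l
    have hpq : g p ≤ q :=
      hgap i j hij p (mem_biUnion.2 ⟨k, hk, hp⟩) q (mem_biUnion.2 ⟨l, hl, hq⟩)
    exact hg p q hpq k l hp hq a hak b hbl
  have hyd := hyo.isDisjointSeq fun i => (hv i).biUnion fun k _ => hx.1 k
  exact ⟨_, _, htd, htu, fun a ha => (htA ha).1, hyd, hyo, IsNaturalMap.biUnion hφ hv⟩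

theorem isOrderedUnionUltrafilter (h : AddIso u u') (hu : IsOrderedUnionUltrafilter u) :
    IsOrderedUnionUltrafilter u' := by
  obtain ⟨φ, rfl, htransfer⟩ := h.exists_map_isOrderedSeq hu
  intro A hA
  obtain ⟨t, y, -, htu, htA, hyd, hyo, hφ⟩ := htransfer _ hA
  exact ⟨y, hyd, hyo, hφ.image_FU ▸ image_mem_map htu, hφ.image_FU ▸ Set.image_subset_iff.2 htA⟩

theorem isStable (h : AddIso u u') (hu : IsOrderedUnionUltrafilter u) (hst : IsStable u) :
    IsStable u' := by
  obtain ⟨φ, rfl, htransfer⟩ := h.exists_map_isOrderedSeq hu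
  intro z _ hz
  choose r hrd _ hru hrz using fun α => hu _ (hz α)
  obtain ⟨t₀, ht₀d, ht₀u, ht₀r⟩ := hst r hrd hru
  obtain ⟨t, y, htd, htu, htt₀, hyd, -, hφ⟩ := htransfer _ ht₀u
  refine ⟨y, hyd, hφ.image_FU ▸ image_mem_map htu, fun α => ?_⟩
  have htr : AlmostCond t (r α) := .trans htd ht₀d.1 ⟨0, htt₀⟩ (ht₀r α)
  exact hφ.almostCond htr (hrz α)

end AddIso

/-- Every additively isomorphic image of a stable ordered union ultrafilter is a
stable ordered union ultrafilter. -/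
theorem addIso_stable_ordered_union (u u' : Ultrafilter (Finset ℕ))
    (hu : IsOrderedUnionUltrafilter u) (hst : IsStable u) (hiso : AddIso u u') :
    IsOrderedUnionUltrafilter u' ∧ IsStable u' := by
  exact ⟨hiso.isOrderedUnionUltrafilter hu, hiso.isStable hu hst⟩
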